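/- Let R = k[x1,x2,x3,x4] over a field k of characteristic zero and let I be a homogeneous artinian Gorenstein ideal of codimension four with even socle degree e and h-vector (h_0,...,h_e) satisfying h_{e/2} < h_{e/2−1}. Then the graded piece I_{e/2} cannot have a greatest common divisor of degree d with 0 < d < 3, provided that the h-vector of R/(I:D) is unimodal for any such putative GCD D (as holds by induction on socle degree in the paper). More precisely: if D is a form of degree d ∈ {1,2} with (I,D)_j = (D)_j for all j ≤ e/2 and the Hilbert function of the Gorenstein algebra R/(I:D) is unimodal, then h_{e/2} ≥ h_{e/2−1}, a contradiction. -/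

import Mathlib

/-!
Write `e = 2m`, `J = (I : D)`, `h = hilbertFn I`, `h' = hilbertFn J` and `r i = dim R_i`.

In degrees `i ≤ m` every form of `I` is a multiple of `D`, so multiplication by `D` identifies
`J_{i-d}` with `I_i`; hence `h i = r i - r (i - d) + h' (i - d)` (and `h i = r i` for `i < d`).
As `r i = (i+3 choose 3)` is a convex sequence, `h (m - 1) ≤ h m` follows once
`h' (m - d - 1) ≤ h' (m - d)`.

Choose a functional `φ` on `R` whose kernel in degree `e` is `I_e`, which is possible because
`(R/I)_e` lies in the one-dimensional socle.  For `a + d + b = e` the pairing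
`R_a × R_b → k, (f, g) ↦ φ (D f g)` has left kernel exactly `J_a`, because every nonzero form of
`R/I` has a nonzero multiple in degree `e`, and its right kernel contains `J_b`.  Therefore
`h' a ≤ h' b`; in particular `h' (m - d - 1) ≤ h' (m + 1)`.  If `h'` dropped strictly from
`m - d - 1` to `m - d`, unimodality would keep it below `h' (m - d - 1)` at `m + 1`, which is
impossible.
-/

open MvPolynomial

variable {k : Type*} [Field k] {n : ℕ}

/-- The degree-`i` graded piece of `R/I`, as a `k`-submodule of `R/I`. -/
noncomputable def quotPiece (I : Ideal (MvPolynomial (Fin n) k)) (i : ℕ) :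
    Submodule k (MvPolynomial (Fin n) k ⧸ I) :=
  (homogeneousSubmodule (Fin n) k i).map (Ideal.Quotient.mkₐ k I).toLinearMap

/-- The Hilbert function of `R/I`:  `H_{R/I}(i) = dim_k (R/I)_i`. -/
noncomputable def hilbertFn (I : Ideal (MvPolynomial (Fin n) k)) (i : ℕ) : ℕ :=
  Module.finrank k (quotPiece I i)

/-- The socle of `R/I`, i.e. the annihilator of the irrelevant maximal ideal of `R/I`. -/
noncomputable def socle (I : Ideal (MvPolynomial (Fin n) k)) :
    Submodule k (MvPolynomial (Fin n) k ⧸ I) :=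
  ⨅ j : Fin n, LinearMap.ker (LinearMap.mulLeft k (Ideal.Quotient.mk I (X j)))

/-- An ideal is homogeneous if it contains all homogeneous components of its elements. -/
def IsHomogeneousIdeal (I : Ideal (MvPolynomial (Fin n) k)) : Prop :=
  ∀ f ∈ I, ∀ i : ℕ, homogeneousComponent i f ∈ I

/-- A sequence is unimodal: it never strictly increases after it has strictly decreased,
i.e. it is non-decreasing up to some index `j` and non-increasing afterwards. -/
def UnimodalSeq (h : ℕ → ℕ) : Prop :=
  ∃ j : ℕ, (∀ i, i < j → h i ≤ h (i + 1)) ∧ (∀ i, j ≤ i → h (i + 1) ≤ h i)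

/-- The degree-`d` graded piece of an ideal, as a `k`-submodule of `R`. -/
noncomputable def idealPiece (I : Ideal (MvPolynomial (Fin n) k)) (d : ℕ) :
    Submodule k (MvPolynomial (Fin n) k) :=
  homogeneousSubmodule (Fin n) k d ⊓ I.restrictScalars k

/-- The number of minimal generators of `I` in degree `d`, i.e. `dim_k (I/mI)_d`,
where `m = (x_1, …, x_n)` is the irrelevant maximal ideal. -/
noncomputable def minGens (I : Ideal (MvPolynomial (Fin n) k)) (d : ℕ) : ℕ :=
  Module.finrank k ((idealPiece I d).map
    ((Ideal.span (Set.range (X : Fin n → MvPolynomial (Fin n) k)) * I).restrictScalars k).mkQ)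

instance finite_homogeneousSubmodule (i : ℕ) :
    Module.Finite k (homogeneousSubmodule (Fin n) k i) :=
  Module.Finite.iff_fg.2 (homogeneousSubmodule_fg (Fin n) k i)

instance finite_idealPiece (I : Ideal (MvPolynomial (Fin n) k)) (i : ℕ) :
    Module.Finite k (idealPiece I i) :=
  Submodule.finiteDimensional_of_le (inf_le_left : _ ≤ homogeneousSubmodule (Fin n) k i)

theorem mem_idealPiece {I : Ideal (MvPolynomial (Fin n) k)} {i : ℕ}
    {f : MvPolynomial (Fin n) k} : f ∈ idealPiece I i ↔ f.IsHomogeneous i ∧ f ∈ I := Iff.rfl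

/-- Rank–nullity for any linear map on `R_i` with kernel `I_i`. -/
theorem finrank_range_add_finrank_idealPiece {W : Type*} [AddCommGroup W] [Module k W]
    (I : Ideal (MvPolynomial (Fin n) k)) (i : ℕ) (T : homogeneousSubmodule (Fin n) k i →ₗ[k] W)
    (hT : ∀ f, T f = 0 ↔ (f : MvPolynomial (Fin n) k) ∈ I) :
    Module.finrank k (LinearMap.range T) + Module.finrank k (idealPiece I i)
      = Module.finrank k (homogeneousSubmodule (Fin n) k i) := by
  rw [← T.finrank_range_add_finrank_ker, ← Submodule.finrank_map_subtype_eq _ (LinearMap.ker T)]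
  suffices h : idealPiece I i = (LinearMap.ker T).map (homogeneousSubmodule (Fin n) k i).subtype by
    rw [h]
  ext f
  simp only [mem_idealPiece, Submodule.mem_map, LinearMap.mem_ker, Submodule.subtype_apply, hT]
  constructor
  · rintro ⟨h1, h2⟩
    exact ⟨⟨f, h1⟩, h2, rfl⟩
  · rintro ⟨g, h, rfl⟩
    exact ⟨g.2, h⟩

theorem hilbertFn_add_finrank_idealPiece (I : Ideal (MvPolynomial (Fin n) k)) (i : ℕ) :
    hilbertFn I i + Module.finrank k (idealPiece I i)
      = Module.finrank k (homogeneousSubmodule (Fin n) k i) := by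
  rw [← finrank_range_add_finrank_idealPiece I i
    ((Ideal.Quotient.mkₐ k I).toLinearMap.domRestrict _)
    (fun f => by simp [Ideal.Quotient.eq_zero_iff_mem]), LinearMap.range_domRestrict]
  rfl

theorem finrank_homogeneousSubmodule_four (i : ℕ) :
    Module.finrank k (homogeneousSubmodule (Fin 4) k i) = (i + 3).choose 3 := by
  have h : homogeneousSubmodule (Fin 4) k i
      = restrictSupport k (((Finset.univ : Finset (Fin 4)).finsuppAntidiag i : Finset _) :
          Set (Fin 4 →₀ ℕ)) := by
    rw [homogeneousSubmodule_eq_finsupp_supported, restrictSupport]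
    congr 1
    ext s
    simp [Finset.mem_finsuppAntidiag, Finsupp.degree_eq_sum]
  rw [h, Module.finrank_eq_card_basis (basisRestrictSupport k _)]
  simp only [Finset.coe_sort_coe, Fintype.card_coe, Finset.card_finsuppAntidiag_nat_eq_choose,
    Finset.card_univ, Fintype.card_fin]
  rw [show 4 + i - 1 = i + 3 by omega]
  exact Nat.choose_symm_add

/-- A cofactor of a form in a form can be taken to be a form. -/
theorem exists_homogeneous_cofactor {D f : MvPolynomial (Fin n) k} {d i : ℕ}
    (hD : D.IsHomogeneous d) (hf : f.IsHomogeneous i) (h : D ∣ f) :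
    (d ≤ i ∧ ∃ q, q.IsHomogeneous (i - d) ∧ f = D * q) ∨ f = 0 := by
  obtain ⟨q, rfl⟩ := h
  let _ := MvPolynomial.gradedAlgebra (σ := Fin n) (R := k)
  have key : homogeneousComponent i (D * q)
      = if d ≤ i then D * homogeneousComponent (i - d) q else 0 := by
    have := DirectSum.coe_decompose_mul_of_left_mem (homogeneousSubmodule (Fin n) k) (b := q) i hD
    rw [← decomposition.decompose'_apply, ← decomposition.decompose'_apply]
    exact this
  rw [homogeneousComponent_eq_self hf] at key
  split_ifs at key with hdi
  · exact Or.inl ⟨hdi, _, homogeneousComponent_isHomogeneous _ _, key⟩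
  · exact Or.inr key

/-- The top graded piece of `R/I` lies in the socle. -/
theorem mk_mem_socle (I : Ideal (MvPolynomial (Fin n) k)) {e : ℕ}
    (hsoc : ∀ f : MvPolynomial (Fin n) k, f.IsHomogeneous (e + 1) → f ∈ I)
    {f : MvPolynomial (Fin n) k} (hf : f.IsHomogeneous e) :
    Ideal.Quotient.mk I f ∈ socle I := by
  simp only [socle, Submodule.mem_iInf, LinearMap.mem_ker, LinearMap.mulLeft_apply, ← map_mul,
    Ideal.Quotient.eq_zero_iff_mem]
  intro j
  apply hsoc
  rw [add_comm]
  exact (isHomogeneous_X k j).mul hf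

theorem mem_of_hilbertFn_eq_zero {I : Ideal (MvPolynomial (Fin n) k)} {i : ℕ}
    (h : hilbertFn I i = 0) {f : MvPolynomial (Fin n) k} (hf : f.IsHomogeneous i) : f ∈ I := by
  have h1 := hilbertFn_add_finrank_idealPiece I i
  rw [h, zero_add] at h1
  have h2 : idealPiece I i = homogeneousSubmodule (Fin n) k i :=
    Submodule.eq_of_le_of_finrank_eq inf_le_left h1
  have h3 : f ∈ idealPiece I i := h2 ▸ hf
  exact h3.2

theorem exists_not_mem_of_hilbertFn_ne_zero {I : Ideal (MvPolynomial (Fin n) k)} {i : ℕ}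
    (h : hilbertFn I i ≠ 0) : ∃ f : MvPolynomial (Fin n) k, f.IsHomogeneous i ∧ f ∉ I := by
  by_contra! hc
  have h1 := hilbertFn_add_finrank_idealPiece I i
  have h2 : idealPiece I i = homogeneousSubmodule (Fin n) k i :=
    le_antisymm inf_le_left fun f hf => ⟨hf, hc f hf⟩
  rw [h2] at h1
  omega

/-- Every nonzero element of the socle generates it. -/
theorem exists_smul_sub_mem {I : Ideal (MvPolynomial (Fin n) k)}
    (hgor : Module.finrank k (socle I) = 1) {f v : MvPolynomial (Fin n) k}
    (hf : Ideal.Quotient.mk I f ∈ socle I) (hv : Ideal.Quotient.mk I v ∈ socle I)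
    (hvI : v ∉ I) : ∃ c : k, c • v - f ∈ I := by
  have hne : (⟨_, hv⟩ : socle I) ≠ 0 := fun h =>
    hvI (Ideal.Quotient.eq_zero_iff_mem.1 (congrArg Subtype.val h))
  obtain ⟨c, hc⟩ := (finrank_eq_one_iff_of_nonzero' _ hne).1 hgor ⟨_, hf⟩
  refine ⟨c, ?_⟩
  have hc' : c • Ideal.Quotient.mk I v = Ideal.Quotient.mk I f := congrArg Subtype.val hc
  rw [← Ideal.Quotient.mk_eq_mk_iff_sub_mem, ← hc']
  rfl

/-- In a graded Gorenstein algebra of socle degree `e`, a nonzero form has a nonzero multiple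
in degree `e`. -/
theorem exists_mul_not_mem {I : Ideal (MvPolynomial (Fin n) k)} (hhom : IsHomogeneousIdeal I)
    (hgor : Module.finrank k (socle I) = 1) {e : ℕ}
    (hsoc : hilbertFn I e ≠ 0 ∧ ∀ i, e < i → hilbertFn I i = 0) (b : ℕ) :
    ∀ (i : ℕ) (f : MvPolynomial (Fin n) k), i + b = e → f.IsHomogeneous i → f ∉ I →
      ∃ g : MvPolynomial (Fin n) k, g.IsHomogeneous b ∧ f * g ∉ I := by
  induction b with
  | zero => exact fun i f _ _ hfI => ⟨1, isHomogeneous_one _ _, by simpa using hfI⟩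
  | succ b ih =>
    intro i f hi hf hfI
    by_cases hx : ∃ j, f * X j ∉ I
    · obtain ⟨j, hj⟩ := hx
      obtain ⟨g, hg, hgI⟩ := ih (i + 1) (f * X j) (by omega)
        (hf.mul (isHomogeneous_X k j)) hj
      refine ⟨X j * g, ?_, by rwa [← mul_assoc]⟩
      rw [add_comm b 1]
      exact (isHomogeneous_X k j).mul hg
    · exfalso
      push Not at hx
      have hfs : Ideal.Quotient.mk I f ∈ socle I := by
        simp only [socle, Submodule.mem_iInf, LinearMap.mem_ker, LinearMap.mulLeft_apply,
          ← map_mul, Ideal.Quotient.eq_zero_iff_mem]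
        exact fun j => mul_comm f (X j) ▸ hx j
      obtain ⟨v, hv, hvI⟩ := exists_not_mem_of_hilbertFn_ne_zero hsoc.1
      obtain ⟨c, hc⟩ := exists_smul_sub_mem hgor hfs (mk_mem_socle I
        (fun f hf => mem_of_hilbertFn_eq_zero (hsoc.2 _ (Nat.lt_succ_self e)) hf) hv) hvI
      -- The degree-`i` component of `c • v - f` is `-f`, as `v` lives in degree `e ≠ i`.
      have h := hhom _ hc i
      rw [map_sub, map_smul, homogeneousComponent_of_mem hv, homogeneousComponent_eq_self hf,
        if_neg (by omega), smul_zero, zero_sub, neg_mem_iff] at h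
      exact hfI h

/-- A functional on `R` whose kernel in the socle degree is the top graded piece of `I`. -/
theorem exists_dual_socle {I : Ideal (MvPolynomial (Fin n) k)}
    (hgor : Module.finrank k (socle I) = 1) {e : ℕ}
    (hsoc : hilbertFn I e ≠ 0 ∧ ∀ i, e < i → hilbertFn I i = 0) :
    ∃ φ : MvPolynomial (Fin n) k →ₗ[k] k,
      ∀ f : MvPolynomial (Fin n) k, f.IsHomogeneous e → (φ f = 0 ↔ f ∈ I) := by
  have htop := fun (f : MvPolynomial (Fin n) k) hf =>
    mem_of_hilbertFn_eq_zero (hsoc.2 _ (Nat.lt_succ_self e)) (f := f) hf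
  obtain ⟨v, hv, hvI⟩ := exists_not_mem_of_hilbertFn_ne_zero hsoc.1
  obtain ⟨ψ, hψ⟩ : ∃ ψ : Module.Dual k (MvPolynomial (Fin n) k ⧸ I),
      ψ (Ideal.Quotient.mk I v) ≠ 0 := by
    by_contra! hc
    exact hvI (Ideal.Quotient.eq_zero_iff_mem.1 ((Module.forall_dual_apply_eq_zero_iff k _).1 hc))
  have hker : ∀ f ∈ I, (ψ ∘ₗ (Ideal.Quotient.mkₐ k I).toLinearMap) f = 0 := fun f hf => by
    simp [Ideal.Quotient.eq_zero_iff_mem.2 hf]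
  refine ⟨ψ ∘ₗ (Ideal.Quotient.mkₐ k I).toLinearMap, fun f hf => ⟨fun h => ?_, hker f⟩⟩
  obtain ⟨c, hc⟩ := exists_smul_sub_mem hgor (mk_mem_socle I htop hf) (mk_mem_socle I htop hv) hvI
  have h1 := hker _ hc
  rw [map_sub, h, map_smul, sub_zero, smul_eq_zero] at h1
  rcases h1 with rfl | h1
  · simpa using hc
  · exact absurd h1 hψ

theorem mem_colon_iff {I : Ideal (MvPolynomial (Fin n) k)} {D f : MvPolynomial (Fin n) k} :
    f ∈ I.colon (Ideal.span {D} : Ideal (MvPolynomial (Fin n) k)) ↔ D * f ∈ I := by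
  rw [Ideal.mem_colon_span_singleton, mul_comm]

/-- Half of the symmetry of the Hilbert function of `R/(I:D)` for `R/I` Gorenstein; the other
half is the same statement with `a` and `b` exchanged. -/
theorem hilbertFn_colon_le {I : Ideal (MvPolynomial (Fin n) k)} (hhom : IsHomogeneousIdeal I)
    (hgor : Module.finrank k (socle I) = 1) {e : ℕ}
    (hsoc : hilbertFn I e ≠ 0 ∧ ∀ i, e < i → hilbertFn I i = 0)
    {D : MvPolynomial (Fin n) k} {d a b : ℕ} (hD : D.IsHomogeneous d) (hab : d + a + b = e) :
    hilbertFn (I.colon (Ideal.span {D} : Ideal (MvPolynomial (Fin n) k))) a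
      ≤ hilbertFn (I.colon (Ideal.span {D} : Ideal (MvPolynomial (Fin n) k))) b := by
  set J := I.colon (Ideal.span {D} : Ideal (MvPolynomial (Fin n) k)) with hJ
  obtain ⟨φ, hφ⟩ := exists_dual_socle hgor hsoc
  let B : MvPolynomial (Fin n) k →ₗ[k] MvPolynomial (Fin n) k →ₗ[k] k :=
    (LinearMap.mul k (MvPolynomial (Fin n) k)).compr₂ (φ ∘ₗ LinearMap.mulLeft k D)
  let T : homogeneousSubmodule (Fin n) k a →ₗ[k]
      Module.Dual k (homogeneousSubmodule (Fin n) k b) :=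
    B.domRestrict₁₂ (homogeneousSubmodule (Fin n) k a) (homogeneousSubmodule (Fin n) k b)
  have hT : ∀ f g, T f g = 0 ↔ D * f * (g : MvPolynomial (Fin n) k) ∈ I := fun f g => by
    rw [← hφ _ (hab ▸ (hD.mul f.2).mul g.2), mul_assoc]
    rfl
  have hTker : ∀ f, T f = 0 ↔ (f : MvPolynomial (Fin n) k) ∈ J := fun f => by
    rw [hJ, mem_colon_iff]
    refine ⟨fun h => ?_, fun h => LinearMap.ext fun g => (hT f g).2 (I.mul_mem_right _ h)⟩
    by_contra hf
    obtain ⟨g, hg, hgI⟩ := exists_mul_not_mem hhom hgor hsoc b (d + a) _ hab (hD.mul f.2) hf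
    exact hgI ((hT f ⟨g, hg⟩).1 (by rw [h]; rfl))
  have h1 := finrank_range_add_finrank_idealPiece J a T hTker
  have h2 := hilbertFn_add_finrank_idealPiece J a
  have h3 := hilbertFn_add_finrank_idealPiece J b
  let P : Submodule k (homogeneousSubmodule (Fin n) k b) :=
    (idealPiece J b).comap (homogeneousSubmodule (Fin n) k b).subtype
  have hP : Module.finrank k P = Module.finrank k (idealPiece J b) := by
    rw [← Submodule.finrank_map_subtype_eq, Submodule.map_comap_subtype,
      inf_eq_right.2 (show idealPiece J b ≤ homogeneousSubmodule (Fin n) k b from inf_le_left)]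
  have hle : LinearMap.range T ≤ P.dualAnnihilator := by
    rintro _ ⟨f, rfl⟩
    rw [Submodule.mem_dualAnnihilator]
    intro g hg
    have hg' : D * (g : MvPolynomial (Fin n) k) ∈ I := mem_colon_iff.1 hg.2
    rw [hT, mul_right_comm]
    exact I.mul_mem_right _ hg'
  have h4 := Submodule.finrank_mono hle
  have h5 := Subspace.finrank_add_finrank_dualAnnihilator_eq P
  omega

/-- If all forms of degree `i` in `I` are multiples of `D`, multiplication by `D` identifies
`(I:D)_{i-d}` with `I_i`. -/
theorem finrank_idealPiece_colon {I : Ideal (MvPolynomial (Fin n) k)}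
    {D : MvPolynomial (Fin n) k} {d i : ℕ} (hD : D.IsHomogeneous d) (hD0 : D ≠ 0)
    (hdiv : ∀ f ∈ I, f.IsHomogeneous (d + i) → D ∣ f) :
    Module.finrank k (idealPiece I (d + i)) = Module.finrank k
      (idealPiece (I.colon (Ideal.span {D} : Ideal (MvPolynomial (Fin n) k))) i) := by
  have hinj : Function.Injective (LinearMap.mulLeft k D) := mul_right_injective₀ hD0
  refine Eq.trans ?_ (Submodule.equivMapOfInjective _ hinj _).finrank_eq.symm
  suffices h : idealPiece I (d + i) = (idealPiece (I.colon
      (Ideal.span {D} : Ideal (MvPolynomial (Fin n) k))) i).map (LinearMap.mulLeft k D) by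
    rw [h]
  ext f
  rw [Submodule.mem_map]
  constructor
  · rintro ⟨hf, hfI⟩
    rcases exists_homogeneous_cofactor hD hf (hdiv f hfI hf) with ⟨-, q, hq, rfl⟩ | rfl
    · rw [Nat.add_sub_cancel_left] at hq
      exact ⟨q, ⟨hq, mem_colon_iff.2 hfI⟩, rfl⟩
    · exact ⟨0, zero_mem _, mul_zero D⟩
  · rintro ⟨q, ⟨hq, hqJ⟩, rfl⟩
    exact ⟨hD.mul hq, mem_colon_iff.1 hqJ⟩

/-- Inside the proof of Theorem 3.1 (Case II):  if `R/I` is an artinian Gorenstein algebra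
in `R = k[x₁,x₂,x₃,x₄]` (char `k = 0`) with even socle degree `e` whose h-vector drops in
the middle (`h_{e/2} < h_{e/2-1}`), then the graded piece `I_{e/2}` cannot have a GCD `D`
of degree `d` with `0 < d < 3`:  if `D` is such a form with `(I,D)_j = (D)_j` for all
`j ≤ e/2` and the Hilbert function of the Gorenstein algebra `R/(I:D)` is unimodal, we
get `h_{e/2} ≥ h_{e/2-1}`, a contradiction. -/
theorem no_small_gcd_in_middle_degree {k : Type*} [Field k] [CharZero k]
    (I : Ideal (MvPolynomial (Fin 4) k))
    (hhom : IsHomogeneousIdeal I)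
    (hart : IsArtinianRing (MvPolynomial (Fin 4) k ⧸ I))
    (hne : I ≠ ⊤)
    (hgor : Module.finrank k (socle I) = 1)
    (e : ℕ) (he : Even e)
    (hsoc : hilbertFn I e ≠ 0 ∧ ∀ i, e < i → hilbertFn I i = 0)
    (hdrop : hilbertFn I (e / 2) < hilbertFn I (e / 2 - 1))
    (D : MvPolynomial (Fin 4) k) (d : ℕ) (hd0 : 0 < d) (hd3 : d < 3)
    (hD : D.IsHomogeneous d) (hD0 : D ≠ 0)
    (hpieces : ∀ j ≤ e / 2, ∀ f ∈ I ⊔ Ideal.span {D}, f.IsHomogeneous j →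
      f ∈ Ideal.span {D})
    (huni : UnimodalSeq (hilbertFn (I.colon (Ideal.span {D})))) :
    False := by
  obtain ⟨m, rfl⟩ := he
  rw [show (m + m) / 2 = m by omega] at hdrop hpieces
  have hdiv : ∀ j ≤ m, ∀ f ∈ I, f.IsHomogeneous j → D ∣ f := fun j hj f hf hfj =>
    Ideal.mem_span_singleton.1 (hpieces j hj f (Ideal.mem_sup_left hf) hfj)
  have hhigh : ∀ i, d + i ≤ m → hilbertFn I (d + i) + (i + 3).choose 3
      = hilbertFn (I.colon (Ideal.span {D})) i + (d + i + 3).choose 3 := fun i hi => by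
    have h1 := hilbertFn_add_finrank_idealPiece I (d + i)
    have h2 := hilbertFn_add_finrank_idealPiece (I.colon (Ideal.span {D})) i
    rw [finrank_homogeneousSubmodule_four] at h1 h2
    rw [finrank_idealPiece_colon hD hD0 (hdiv _ hi)] at h1
    omega
  have hlow : ∀ i, i < d → i ≤ m → hilbertFn I i = (i + 3).choose 3 := fun i hid him => by
    have h1 := hilbertFn_add_finrank_idealPiece I i
    have h2 : idealPiece I i = ⊥ := (Submodule.eq_bot_iff _).2 fun f hf =>
      (exists_homogeneous_cofactor hD hf.1 (hdiv i him f hf.2 hf.1)).resolve_left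
        fun h => by omega
    rwa [h2, finrank_bot, add_zero, finrank_homogeneousSubmodule_four] at h1
  -- Pascal's rule: the first difference of `(i + 3).choose 3` is `(i + 3).choose 2`.
  have hpascal : ∀ i, (i + 1 + 3).choose 3 = (i + 3).choose 2 + (i + 3).choose 3 := fun i =>
    Nat.choose_succ_succ (i + 3) 2
  have hm : m ≠ 0 := by
    rintro rfl
    exact lt_irrefl _ hdrop
  obtain ⟨l, rfl⟩ := Nat.exists_eq_succ_of_ne_zero hm
  simp only [Nat.succ_eq_add_one, Nat.add_sub_cancel] at *
  have hp := hpascal l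
  rcases lt_trichotomy (l + 1) d with hlt | rfl | hgt
  · rw [hlow _ hlt le_rfl, hlow l (by omega) (by omega)] at hdrop
    omega
  · have h1 := hhigh 0 le_rfl
    have h2 := hlow l (by omega) (by omega)
    have h3 : 0 < (l + 3).choose 2 := Nat.choose_pos (by omega)
    simp at h1
    omega
  · obtain ⟨a, rfl⟩ : ∃ a, l = d + a := ⟨l - d, by omega⟩
    have h1 := hhigh a (by omega)
    have h2 := hhigh (a + 1) (by omega)
    have h3 := hpascal a
    have h4 : (a + 3).choose 2 ≤ (d + a + 3).choose 2 := Nat.choose_le_choose 2 (by omega)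
    rw [← add_assoc] at h2
    have h5 : hilbertFn (I.colon (Ideal.span {D})) (a + 1)
        < hilbertFn (I.colon (Ideal.span {D})) a := by omega
    have h6 := hilbertFn_colon_le hhom hgor hsoc hD
      (show d + a + (d + a + 1 + 1) = d + a + 1 + (d + a + 1) by omega)
    obtain ⟨j, hj1, hj2⟩ := huni
    have hja : j ≤ a := by
      by_contra hc
      exact absurd (hj1 a (by omega)) (by omega)
    have h7 : ∀ t, hilbertFn (I.colon (Ideal.span {D})) (a + 1 + t)
        ≤ hilbertFn (I.colon (Ideal.span {D})) (a + 1) := fun t => by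
      induction t with
      | zero => exact le_rfl
      | succ t ih => exact (hj2 (a + 1 + t) (by omega)).trans ih
    have h8 := h7 (d + 1)
    rw [show a + 1 + (d + 1) = d + a + 1 + 1 by omega] at h8
    omega
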